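/- arXiv:2009.09604 — 6 statements merged into one kernel-verified Lean document; each statement's English description precedes it below -/
import Mathlib

section
/- Let S be a countable set and ε ∈ ℝ. Suppose P = Σ_{i∈I} α_i·P_i and Q = Σ_{i∈I} β_i·Q_i, where I is a countable index set, (α_i)_{i∈I} and (β_i)_{i∈I} are families of strictly positive reals each summing to 1, and each P_i and Q_i is a probability distribution on S. Then d_ε(P‖Q) ≤ Σ_{i∈I} α_i · d_{ε + ln(β_i/α_i)}(P_i‖Q_i). -/
/-- Hockey-stick divergence `d_ε(P‖Q) = Σ_x max(P x − e^ε·Q x, 0)` for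
distributions given by their probability mass functions on a countable set. -/
noncomputable def hsDiv {S : Type*} (ε : ℝ) (P Q : S → ℝ) : ℝ :=
  ∑' x, max (P x - Real.exp ε * Q x) 0

/-- mixture decomposition bound for the hockey-stick divergence. -/
theorem stmt_0 {S I : Type} [Countable S] [Countable I] (ε : ℝ)
    (α β : I → ℝ) (P Q : I → S → ℝ)
    (hα : ∀ i, 0 < α i) (hβ : ∀ i, 0 < β i)
    (hαsum : ∑' i, α i = 1) (hβsum : ∑' i, β i = 1)
    (hPnn : ∀ i x, 0 ≤ P i x) (hPsum : ∀ i, ∑' x, P i x = 1)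
    (hQnn : ∀ i x, 0 ≤ Q i x) (hQsum : ∀ i, ∑' x, Q i x = 1) :
    hsDiv ε (fun x => ∑' i, α i * P i x) (fun x => ∑' i, β i * Q i x)
      ≤ ∑' i, α i * hsDiv (ε + Real.log (β i / α i)) (P i) (Q i) := by
  have summable_of_one : ∀ {T : Type} (f : T → ℝ), ∑' t, f t = 1 → Summable f := by
    intro T f h
    by_contra hn
    rw [tsum_eq_zero_of_not_summable hn] at h
    exact zero_ne_one h
  have sα := summable_of_one _ hαsum
  have sβ := summable_of_one _ hβsum
  have sP := fun i => summable_of_one _ (hPsum i)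
  have sQ := fun i => summable_of_one _ (hQsum i)
  have key : ∀ (γ : I → ℝ) (R : I → S → ℝ), (∀ i, 0 < γ i) → Summable γ →
      (∀ i x, 0 ≤ R i x) → (∀ i, Summable (R i)) → (∀ i, ∑' x, R i x = 1) →
      Summable (fun p : I × S => γ p.1 * R p.1 p.2) := by
    intro γ R hγ sγ hR sR hR1
    have h0 : (0 : I × S → ℝ) ≤ fun p : I × S => γ p.1 * R p.1 p.2 := by
      intro p
      exact mul_nonneg (hγ p.1).le (hR p.1 p.2)
    refine (summable_prod_of_nonneg h0).2 ⟨fun i => (sR i).mul_left (γ i), ?_⟩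
    simpa [tsum_mul_left, hR1] using sγ
  have sA := key α P hα sα hPnn sP hPsum
  have sB := key β Q hβ sβ hQnn sQ hQsum
  let g : I → S → ℝ := fun i x => max (α i * P i x - Real.exp ε * (β i * Q i x)) 0
  have hg0 : ∀ i x, 0 ≤ g i x := fun i x => le_max_right _ _
  have hgA : ∀ i x, g i x ≤ α i * P i x := fun i x => max_le
    (sub_le_self _ (mul_nonneg (Real.exp_pos ε).le (mul_nonneg (hβ i).le (hQnn i x))))
    (mul_nonneg (hα i).le (hPnn i x))
  have sG : Summable (Function.uncurry g) :=
    Summable.of_nonneg_of_le (fun p => hg0 p.1 p.2) (fun p => hgA p.1 p.2) sA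
  have hR : ∀ i, α i * hsDiv (ε + Real.log (β i / α i)) (P i) (Q i) = ∑' x, g i x := by
    intro i
    unfold hsDiv
    rw [← tsum_mul_left]
    refine tsum_congr fun x => ?_
    rw [Real.exp_add, Real.exp_log (div_pos (hβ i) (hα i)), mul_max_of_nonneg _ _ (hα i).le,
      mul_zero]
    have h := (hα i).ne'
    have : α i * (P i x - Real.exp ε * (β i / α i) * Q i x)
        = α i * P i x - Real.exp ε * (β i * Q i x) := by
      field_simp
    rw [this]
  have hcA : ∀ x, Summable (fun i => α i * P i x) := fun x => sA.prod_symm.prod_factor x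
  have hcB : ∀ x, Summable (fun i => β i * Q i x) := fun x => sB.prod_symm.prod_factor x
  have hcG : ∀ x, Summable (fun i => g i x) := fun x => sG.prod_symm.prod_factor x
  have hpt : ∀ x, max ((∑' i, α i * P i x) - Real.exp ε * ∑' i, β i * Q i x) 0
      ≤ ∑' i, g i x := by
    intro x
    refine max_le ?_ (tsum_nonneg fun i => hg0 i x)
    rw [← tsum_mul_left, ← (hcA x).tsum_sub ((hcB x).mul_left (Real.exp ε))]
    exact ((hcA x).sub ((hcB x).mul_left (Real.exp ε))).tsum_le_tsum (fun i => le_max_left _ _) (hcG x)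
  have sS : Summable (fun x => ∑' i, g i x) := sG.prod_symm.prod
  simp_rw [hR]
  rw [← sG.tsum_comm]
  unfold hsDiv
  exact (Summable.of_nonneg_of_le (fun x => le_max_right _ _) hpt sS).tsum_le_tsum hpt sS
end

section
/- Let X and M be countable sets, ε ≥ 0, δ ≥ 0, and let R map each x ∈ X to a probability distribution R(x) on M. Assume R is (ε,δ)-locally differentially private, i.e., for all x, y ∈ X and every subset E ⊆ M, R(x)(E) ≤ e^ε·R(y)(E) + δ. Then for every i, j ∈ X, the probability under z ← R(i) that R(i)(z) ≥ 2e^ε·R(j)(z) is at most 2δ; that is, Σ_{z ∈ M : R(i)(z) ≥ 2e^ε·R(j)(z)} R(i)(z) ≤ 2δ. -/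
/-- for an (ε,δ)-locally DP randomizer, the probability under
`z ← R i` that `R i z ≥ 2·e^ε·R j z` is at most `2δ`. -/
theorem stmt_1 {X M : Type} [Countable X] [Countable M] (ε δ : ℝ) (hε : 0 ≤ ε) (hδ : 0 ≤ δ)
    (R : X → M → ℝ) (hRnn : ∀ x z, 0 ≤ R x z) (hRsum : ∀ x, ∑' z, R x z = 1)
    (hDP : ∀ x y : X, ∀ E : Set M,
      ∑' z : E, R x (z : M) ≤ Real.exp ε * ∑' z : E, R y (z : M) + δ) :
    ∀ i j : X,
      ∑' z : {z : M | 2 * Real.exp ε * R j z ≤ R i z}, R i (z : M) ≤ 2 * δ := by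
  intro i j
  have hs : ∀ x, Summable (R x) := by
    intro x
    by_contra h
    have h1 := hRsum x
    rw [tsum_eq_zero_of_not_summable h] at h1
    exact zero_ne_one h1
  have h1 := hDP i j {z : M | 2 * Real.exp ε * R j z ≤ R i z}
  have h2 : ∑' z : {z : M | 2 * Real.exp ε * R j z ≤ R i z}, 2 * Real.exp ε * R j (z : M)
      ≤ ∑' z : {z : M | 2 * Real.exp ε * R j z ≤ R i z}, R i (z : M) :=
    Summable.tsum_le_tsum (fun z => z.2) (((hs j).subtype _).mul_left _) ((hs i).subtype _)
  rw [tsum_mul_left] at h2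
  linarith
end

section
/- Let L ≥ 1 be an integer, Λ > 0, and let U, V be Borel probability distributions on [0,Λ] with E[U^j] = E[V^j] for all j ∈ {1,…,L}. Let D ∈ ℕ and θ, λ ∈ (ℝ_{≥0})^D with Σ_{i=1}^D θ_i = 1. Suppose Σ_{i : λ_i ≥ 2Λ²·θ_i} θ_i ≥ 1 − 1/(2Λ). Then ‖ E_{u←U}[Poi⃗(u·θ + λ)] − E_{v←V}[Poi⃗(v·θ + λ)] ‖²_TV ≤ 1/L!. -/
open MeasureTheory

/-- The Poisson pmf with mean `μ` at `k`. -/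
noncomputable def poiP (μ : ℝ) (k : ℕ) : ℝ := Real.exp (-μ) * μ ^ k / (Nat.factorial k)

/-- The mixture over `u ← U` of the product Poisson distribution
`Poi⃗(u·θ + λ)`, as a pmf on `ℕ^D`. -/
noncomputable def poiMix {D : ℕ} (U : Measure ℝ) (θ lam : Fin D → ℝ)
    (m : Fin D → ℕ) : ℝ :=
  ∫ u, ∏ i, poiP (u * θ i + lam i) (m i) ∂U

theorem hs_congr {ι : Type*} {f g : ι → ℝ} {a b : ℝ} (h : HasSum f a) (hfg : ∀ x, g x = f x)
    (hab : b = a) : HasSum g b := by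
  rw [funext hfg, hab]; exact h

theorem aux_pi : ∀ (D : ℕ) (f : Fin D → ℕ → ℝ) (s : Fin D → ℝ), (∀ i k, 0 ≤ f i k) →
    (∀ i, HasSum (f i) (s i)) → HasSum (fun m : Fin D → ℕ => ∏ i, f i (m i)) (∏ i, s i) := by
  intro D
  induction D with
  | zero =>
    intro f s _ _
    simp
  | succ n ih =>
    intro f s hf hs
    have h1 := ih (fun i => f i.succ) (fun i => s i.succ) (fun i k => hf _ k) (fun i => hs _)
    have h3 : Summable (fun x : ℕ × (Fin n → ℕ) => f 0 x.1 * ∏ i : Fin n, f i.succ (x.2 i)) :=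
      Summable.mul_of_nonneg (f := f 0) (g := fun m : Fin n → ℕ => ∏ i : Fin n, f i.succ (m i))
        (hs 0).summable h1.summable (fun k => hf 0 k)
        (fun m => Finset.prod_nonneg fun i _ => hf i.succ (m i))
    have h2 := HasSum.mul (hs 0) h1 h3
    rw [← (Fin.consEquiv (fun _ : Fin (n+1) => ℕ)).hasSum_iff, Fin.prod_univ_succ]
    refine hs_congr h2 (fun x => ?_) rfl
    simp [Fin.consEquiv, Fin.prod_univ_succ]

theorem aux_exp (x : ℝ) : HasSum (fun k : ℕ => x ^ k / (Nat.factorial k : ℝ)) (Real.exp x) := by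
  rw [Real.exp_eq_exp_ℝ]
  exact NormedSpace.expSeries_div_hasSum_exp x

/-- one coordinate of the likelihood ratio -/
noncomputable def gg (Λ t l u : ℝ) (k : ℕ) : ℝ :=
  Real.exp (-((u - Λ) * t)) * ((u * t + l) / (Λ * t + l)) ^ k

theorem poiP_eq (Λ t l u : ℝ) (k : ℕ) (hΛ : 0 < Λ) (ht : 0 ≤ t) (hl : 0 ≤ l) :
    poiP (u * t + l) k = poiP (Λ * t + l) k * gg Λ t l u k := by
  unfold poiP gg
  have key : (u * t + l) ^ k = (Λ * t + l) ^ k * ((u * t + l) / (Λ * t + l)) ^ k := by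
    rw [← mul_pow]
    by_cases hb : Λ * t + l = 0
    · have h1 : 0 ≤ Λ * t := by positivity
      have h2 : l = 0 := by linarith
      have h3 : t = 0 := by
        have : Λ * t = 0 := by linarith
        rcases mul_eq_zero.1 this with h | h
        · linarith
        · exact h
      simp [h2, h3]
    · rw [mul_div_cancel₀ _ hb]
  have he : Real.exp (-(u * t + l)) = Real.exp (-(Λ * t + l)) * Real.exp (-((u - Λ) * t)) := by
    rw [← Real.exp_add]; congr 1; ring
  rw [key, he]; ring

theorem coord_sum (Λ t l u v : ℝ) (hΛ : 0 < Λ) (ht : 0 ≤ t) (hl : 0 ≤ l) :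
    HasSum (fun k => poiP (Λ * t + l) k * gg Λ t l u k * gg Λ t l v k)
      (Real.exp (t ^ 2 / (Λ * t + l) * ((u - Λ) * (v - Λ)))) := by
  by_cases hb : Λ * t + l = 0
  · have h1 : 0 ≤ Λ * t := by positivity
    have h2 : l = 0 := by linarith
    have h3 : t = 0 := by
      have : Λ * t = 0 := by linarith
      rcases mul_eq_zero.1 this with h | h
      · linarith
      · exact h
    subst h2 h3
    have := aux_exp 0
    refine hs_congr this (fun k => ?_) ?_
    · cases k <;> simp [poiP, gg]
    · simp
  · have := (aux_exp ((u * t + l) * (v * t + l) / (Λ * t + l))).mul_left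
      (Real.exp (-(Λ * t + l) - (u - Λ) * t - (v - Λ) * t))
    refine hs_congr this (fun k => ?_) ?_
    · unfold poiP gg
      have he : Real.exp (-(Λ * t + l) - (u - Λ) * t - (v - Λ) * t)
        = Real.exp (-(Λ * t + l)) * Real.exp (-((u - Λ) * t)) * Real.exp (-((v - Λ) * t)) := by
        rw [← Real.exp_add, ← Real.exp_add]; congr 1
      have hk : ((u * t + l) * (v * t + l) / (Λ * t + l)) ^ k
        = (Λ * t + l) ^ k * ((u * t + l) / (Λ * t + l)) ^ k * ((v * t + l) / (Λ * t + l)) ^ k := by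
        rw [← mul_pow, ← mul_pow]; congr 1; field_simp
      rw [he, hk]; ring
    · rw [← Real.exp_add]; congr 1
      clear this
      obtain ⟨b, hb'⟩ : ∃ b, b = Λ * t + l := ⟨_, rfl⟩
      have hl' : l = b - Λ * t := by linarith
      rw [← hb'] at hb ⊢
      rw [hl']
      field_simp
      ring

theorem poiP_nonneg {x : ℝ} (hx : 0 ≤ x) (k : ℕ) : 0 ≤ poiP x k := by
  unfold poiP; positivity

theorem gg_nonneg (Λ t l u : ℝ) (k : ℕ) (hΛ : 0 < Λ) (ht : 0 ≤ t) (hl : 0 ≤ l) (hu : 0 ≤ u) :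
    0 ≤ gg Λ t l u k := by
  unfold gg; positivity

/-- base pmf -/
noncomputable def QQ {D : ℕ} (Λ : ℝ) (θ lam : Fin D → ℝ) (m : Fin D → ℕ) : ℝ :=
  ∏ i, poiP (Λ * θ i + lam i) (m i)

/-- likelihood ratio -/
noncomputable def GG {D : ℕ} (Λ : ℝ) (θ lam : Fin D → ℝ) (m : Fin D → ℕ) (u : ℝ) : ℝ :=
  ∏ i, gg Λ (θ i) (lam i) u (m i)

theorem GG_cont {D : ℕ} (Λ : ℝ) (θ lam : Fin D → ℝ) (m : Fin D → ℕ) :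
    Continuous (GG Λ θ lam m) := by
  unfold GG gg
  fun_prop

theorem full_sum {D : ℕ} (Λ : ℝ) (θ lam : Fin D → ℝ) (hΛ : 0 < Λ) (hθ : ∀ i, 0 ≤ θ i)
    (hlam : ∀ i, 0 ≤ lam i) (u v : ℝ) (hu : 0 ≤ u) (hv : 0 ≤ v) :
    HasSum (fun m => QQ Λ θ lam m * (GG Λ θ lam m u * GG Λ θ lam m v))
      (Real.exp ((∑ i, θ i ^ 2 / (Λ * θ i + lam i)) * ((u - Λ) * (v - Λ)))) := by
  have := aux_pi D (fun i k => poiP (Λ * θ i + lam i) k * gg Λ (θ i) (lam i) u k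
      * gg Λ (θ i) (lam i) v k) _ (fun i k => by
        have h0 : 0 ≤ Λ * θ i + lam i := add_nonneg (mul_nonneg hΛ.le (hθ i)) (hlam i)
        have h1 := poiP_nonneg h0 k
        have h2 := gg_nonneg Λ (θ i) (lam i) u k hΛ (hθ i) (hlam i) hu
        have h3 := gg_nonneg Λ (θ i) (lam i) v k hΛ (hθ i) (hlam i) hv
        positivity)
      (fun i => coord_sum Λ (θ i) (lam i) u v hΛ (hθ i) (hlam i))
  refine hs_congr this (fun m => ?_) ?_
  · simp only [QQ, GG, Finset.prod_mul_distrib]; ring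
  · rw [Finset.sum_mul, Real.exp_sum]

theorem prod_eq {D : ℕ} (Λ : ℝ) (θ lam : Fin D → ℝ) (hΛ : 0 < Λ) (hθ : ∀ i, 0 ≤ θ i)
    (hlam : ∀ i, 0 ≤ lam i) (u : ℝ) (m : Fin D → ℕ) :
    ∏ i, poiP (u * θ i + lam i) (m i) = QQ Λ θ lam m * GG Λ θ lam m u := by
  unfold QQ GG
  rw [← Finset.prod_mul_distrib]
  exact Finset.prod_congr rfl fun i _ => poiP_eq _ _ _ _ _ hΛ (hθ i) (hlam i)

theorem QQ_sum {D : ℕ} (Λ : ℝ) (θ lam : Fin D → ℝ) (hΛ : 0 < Λ) (hθ : ∀ i, 0 ≤ θ i)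
    (hlam : ∀ i, 0 ≤ lam i) : HasSum (QQ Λ θ lam) 1 := by
  have := full_sum Λ θ lam hΛ hθ hlam Λ Λ hΛ.le hΛ.le
  simp only [sub_self, mul_zero, Real.exp_zero] at this
  refine hs_congr this (fun m => ?_) rfl
  rw [← mul_assoc, ← prod_eq Λ θ lam hΛ hθ hlam, ← QQ, ← prod_eq Λ θ lam hΛ hθ hlam, ← QQ]

theorem ae_mem (Λ : ℝ) (U : Measure ℝ) [IsProbabilityMeasure U]
    (hU : U (Set.Icc 0 Λ) = 1) : ∀ᵐ u ∂U, u ∈ Set.Icc 0 Λ :=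
  (mem_ae_iff_prob_eq_one measurableSet_Icc).2 hU

theorem ae_mem_prod (Λ : ℝ) (U V : Measure ℝ) [IsProbabilityMeasure U] [IsProbabilityMeasure V]
    (hU : U (Set.Icc 0 Λ) = 1) (hV : V (Set.Icc 0 Λ) = 1) :
    ∀ᵐ z ∂(U.prod V), z.1 ∈ Set.Icc 0 Λ ∧ z.2 ∈ Set.Icc 0 Λ := by
  have h1 := Measure.quasiMeasurePreserving_fst (μ := U) (ν := V) |>.ae (ae_mem Λ U hU)
  have h2 := Measure.quasiMeasurePreserving_snd (μ := U) (ν := V) |>.ae (ae_mem Λ V hV)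
  filter_upwards [h1, h2] with z a b using ⟨a, b⟩

theorem int_cont (Λ : ℝ) (U : Measure ℝ) [IsProbabilityMeasure U]
    (hU : U (Set.Icc 0 Λ) = 1) (f : ℝ → ℝ) (hf : Continuous f) : Integrable f U := by
  rw [← Measure.restrict_eq_self_of_ae_mem (ae_mem Λ U hU)]
  exact hf.continuousOn.integrableOn_compact isCompact_Icc

theorem int_cont_prod (Λ : ℝ) (U V : Measure ℝ) [IsProbabilityMeasure U] [IsProbabilityMeasure V]
    (hU : U (Set.Icc 0 Λ) = 1) (hV : V (Set.Icc 0 Λ) = 1) (f : ℝ × ℝ → ℝ) (hf : Continuous f) :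
    Integrable f (U.prod V) := by
  have : ∀ᵐ z ∂(U.prod V), z ∈ (Set.Icc 0 Λ ×ˢ Set.Icc 0 Λ : Set (ℝ × ℝ)) :=
    ae_mem_prod Λ U V hU hV
  rw [← Measure.restrict_eq_self_of_ae_mem this]
  exact hf.continuousOn.integrableOn_compact (isCompact_Icc.prod isCompact_Icc)

theorem sum1 {D : ℕ} (Λ : ℝ) (θ lam : Fin D → ℝ) (hΛ : 0 < Λ) (hθ : ∀ i, 0 ≤ θ i)
    (hlam : ∀ i, 0 ≤ lam i) (U V : Measure ℝ) [IsProbabilityMeasure U] [IsProbabilityMeasure V]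
    (hU : U (Set.Icc 0 Λ) = 1) (hV : V (Set.Icc 0 Λ) = 1) :
    HasSum (fun m => QQ Λ θ lam m * ((∫ u, GG Λ θ lam m u ∂U) * ∫ u, GG Λ θ lam m u ∂V))
      (∫ z, Real.exp ((∑ i, θ i ^ 2 / (Λ * θ i + lam i)) * ((z.1 - Λ) * (z.2 - Λ)))
        ∂(U.prod V)) := by
  have hF : ∀ m, Continuous
      (fun z : ℝ × ℝ => QQ Λ θ lam m * (GG Λ θ lam m z.1 * GG Λ θ lam m z.2)) := fun m => by
    have := GG_cont Λ θ lam m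
    fun_prop
  have hz : ∀ᵐ z ∂(U.prod V), HasSum
      (fun m => QQ Λ θ lam m * (GG Λ θ lam m z.1 * GG Λ θ lam m z.2))
      (Real.exp ((∑ i, θ i ^ 2 / (Λ * θ i + lam i)) * ((z.1 - Λ) * (z.2 - Λ)))) := by
    filter_upwards [ae_mem_prod Λ U V hU hV] with z hz
    exact full_sum Λ θ lam hΛ hθ hlam _ _ hz.1.1 hz.2.1
  have := hasSum_integral_of_dominated_convergence (μ := U.prod V)
    (F := fun m z => QQ Λ θ lam m * (GG Λ θ lam m z.1 * GG Λ θ lam m z.2))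
    (fun m z => QQ Λ θ lam m * (GG Λ θ lam m z.1 * GG Λ θ lam m z.2))
    (fun m => (hF m).aestronglyMeasurable)
    (fun m => by
      filter_upwards [ae_mem_prod Λ U V hU hV] with z hz
      refine le_of_eq (Real.norm_of_nonneg ?_)
      refine mul_nonneg (Finset.prod_nonneg fun i _ => poiP_nonneg
        (add_nonneg (mul_nonneg hΛ.le (hθ i)) (hlam i)) _) (mul_nonneg ?_ ?_)
      · exact Finset.prod_nonneg fun i _ => gg_nonneg _ _ _ _ _ hΛ (hθ i) (hlam i) hz.1.1
      · exact Finset.prod_nonneg fun i _ => gg_nonneg _ _ _ _ _ hΛ (hθ i) (hlam i) hz.2.1)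
    (hz.mono fun z h => h.summable)
    ((int_cont_prod Λ U V hU hV (fun z => Real.exp ((∑ i, θ i ^ 2 / (Λ * θ i + lam i)) *
      ((z.1 - Λ) * (z.2 - Λ)))) (by fun_prop)).congr (hz.mono fun z h => h.tsum_eq.symm)) hz
  refine hs_congr this (fun m => ?_) rfl
  rw [integral_const_mul, integral_prod_mul]

theorem sum2 (Λ κ : ℝ)  (hκ : 0 ≤ κ) (U V : Measure ℝ)
    [IsProbabilityMeasure U] [IsProbabilityMeasure V]
    (hU : U (Set.Icc 0 Λ) = 1) (hV : V (Set.Icc 0 Λ) = 1) :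
    HasSum (fun j : ℕ => κ ^ j / (Nat.factorial j : ℝ) *
        ((∫ u, (u - Λ) ^ j ∂U) * ∫ u, (u - Λ) ^ j ∂V))
      (∫ z, Real.exp (κ * ((z.1 - Λ) * (z.2 - Λ))) ∂(U.prod V)) := by
  have hz : ∀ z : ℝ × ℝ, HasSum
      (fun j : ℕ => κ ^ j / (Nat.factorial j : ℝ) * ((z.1 - Λ) ^ j * (z.2 - Λ) ^ j))
      (Real.exp (κ * ((z.1 - Λ) * (z.2 - Λ)))) := by
    intro z
    refine hs_congr (aux_exp (κ * ((z.1 - Λ) * (z.2 - Λ)))) (fun j => ?_) rfl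
    rw [mul_pow, mul_pow]; ring
  have := hasSum_integral_of_dominated_convergence (μ := U.prod V)
    (F := fun j z => κ ^ j / (Nat.factorial j : ℝ) * ((z.1 - Λ) ^ j * (z.2 - Λ) ^ j))
    (fun j z => κ ^ j / (Nat.factorial j : ℝ) * ((z.1 - Λ) ^ j * (z.2 - Λ) ^ j))
    (fun j => by
      have : Continuous (fun z : ℝ × ℝ => κ ^ j / (Nat.factorial j : ℝ) *
        ((z.1 - Λ) ^ j * (z.2 - Λ) ^ j)) := by fun_prop
      exact this.aestronglyMeasurable)
    (fun m => by
      filter_upwards [ae_mem_prod Λ U V hU hV] with z hz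
      refine le_of_eq (Real.norm_of_nonneg ?_)
      have : 0 ≤ (z.1 - Λ) * (z.2 - Λ) :=
        mul_nonneg_of_nonpos_of_nonpos (by linarith [hz.1.2]) (by linarith [hz.2.2])
      rw [← mul_pow]
      positivity)
    (Filter.Eventually.of_forall fun z => (hz z).summable)
    ((int_cont_prod Λ U V hU hV (fun z => Real.exp (κ * ((z.1 - Λ) * (z.2 - Λ))))
      (by fun_prop)).congr (Filter.Eventually.of_forall fun z => (hz z).tsum_eq.symm))
    (Filter.Eventually.of_forall hz)
  refine hs_congr this (fun m => ?_) rfl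
  rw [integral_const_mul, integral_prod_mul (fun u => (u - Λ) ^ m) (fun u => (u - Λ) ^ m)]

theorem mom_eq (Λ : ℝ) (L : ℕ) (U V : Measure ℝ)
    [IsProbabilityMeasure U] [IsProbabilityMeasure V]
    (hU : U (Set.Icc 0 Λ) = 1) (hV : V (Set.Icc 0 Λ) = 1)
    (hmom : ∀ j : ℕ, 1 ≤ j → j ≤ L → ∫ u, u ^ j ∂U = ∫ v, v ^ j ∂V) (j : ℕ) (hj : j ≤ L) :
    ∫ u, (u - Λ) ^ j ∂U = ∫ u, (u - Λ) ^ j ∂V := by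
  simp only [sub_eq_add_neg, add_pow]
  rw [integral_finsetSum _ (fun i _ => int_cont Λ U hU _ (by fun_prop)),
    integral_finsetSum _ (fun i _ => int_cont Λ V hV _ (by fun_prop))]
  refine Finset.sum_congr rfl fun i hi => ?_
  simp only [integral_mul_const]
  congr 2
  rcases Nat.eq_zero_or_pos i with h | h
  · subst h; simp
  · exact hmom i h (by have := Finset.mem_range.1 hi; omega)

theorem mom_bd (Λ : ℝ) (U : Measure ℝ) [IsProbabilityMeasure U]
    (hU : U (Set.Icc 0 Λ) = 1) (j : ℕ) : |∫ u, (u - Λ) ^ j ∂U| ≤ Λ ^ j := by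
  have := norm_integral_le_of_norm_le_const (μ := U) (f := fun u => (u - Λ) ^ j) (C := Λ ^ j) (by
    filter_upwards [ae_mem Λ U hU] with u hu
    rw [norm_pow, Real.norm_eq_abs]
    gcongr
    rw [abs_le]; constructor <;> linarith [hu.1, hu.2])
  simpa using this

theorem kappa_bd (Λ : ℝ) (hΛ : 0 < Λ) (D : ℕ) (θ lam : Fin D → ℝ) (hθ : ∀ i, 0 ≤ θ i)
    (hlam : ∀ i, 0 ≤ lam i) (hθ1 : ∑ i, θ i = 1)
    (hcond : 1 - 1 / (2 * Λ) ≤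
      ∑ i ∈ Finset.univ.filter (fun i => 2 * Λ ^ 2 * θ i ≤ lam i), θ i) :
    (∑ i, θ i ^ 2 / (Λ * θ i + lam i)) * Λ ^ 2 ≤ 1 := by
  have h1 := Finset.sum_filter_add_sum_filter_not Finset.univ
    (fun i => 2 * Λ ^ 2 * θ i ≤ lam i) θ
  have h2 := Finset.sum_filter_add_sum_filter_not Finset.univ
    (fun i => 2 * Λ ^ 2 * θ i ≤ lam i) (fun i => θ i ^ 2 / (Λ * θ i + lam i))
  have h3 : ∑ i ∈ Finset.univ.filter (fun i => 2 * Λ ^ 2 * θ i ≤ lam i),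
      θ i ^ 2 / (Λ * θ i + lam i) ≤
      ∑ i ∈ Finset.univ.filter (fun i => 2 * Λ ^ 2 * θ i ≤ lam i), θ i * (1 / (2 * Λ ^ 2)) := by
    refine Finset.sum_le_sum fun i hi => ?_
    have hi' := (Finset.mem_filter.1 hi).2
    rcases (hθ i).eq_or_lt with h | h
    · simp [← h]
    · rw [mul_one_div, div_le_div_iff₀ (by have := hlam i; positivity) (by positivity)]
      nlinarith [mul_le_mul_of_nonneg_left hi' h.le, mul_pos hΛ (mul_pos h h)]
  have h4 : ∑ i ∈ Finset.univ.filter (fun i => ¬ 2 * Λ ^ 2 * θ i ≤ lam i),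
      θ i ^ 2 / (Λ * θ i + lam i) ≤
      ∑ i ∈ Finset.univ.filter (fun i => ¬ 2 * Λ ^ 2 * θ i ≤ lam i), θ i * (1 / Λ) := by
    refine Finset.sum_le_sum fun i hi => ?_
    rcases (hθ i).eq_or_lt with h | h
    · simp [← h]
    · rw [mul_one_div, div_le_div_iff₀ (by have := hlam i; positivity) (by positivity)]
      nlinarith [mul_nonneg h.le (hlam i)]
  rw [← Finset.sum_mul] at h3 h4
  rw [← h2]
  set S := ∑ i ∈ Finset.univ.filter (fun i => 2 * Λ ^ 2 * θ i ≤ lam i), θ i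
  set T := ∑ i ∈ Finset.univ.filter (fun i => ¬ 2 * Λ ^ 2 * θ i ≤ lam i), θ i with hT
  have hT0 : 0 ≤ T := Finset.sum_nonneg fun i _ => hθ i
  have h5 : T ≤ 1 / (2 * Λ) := by linarith
  have h6 : S ≤ 1 := by linarith
  calc _ ≤ (S * (1 / (2 * Λ ^ 2)) + T * (1 / Λ)) * Λ ^ 2 := by gcongr
    _ ≤ (1 * (1 / (2 * Λ ^ 2)) + 1 / (2 * Λ) * (1 / Λ)) * Λ ^ 2 := by gcongr
    _ = 1 := by field_simp; norm_num

/-- moment matching bound for `CountDistinct` hard instances. -/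
theorem stmt_4 (L : ℕ) (hL : 1 ≤ L) (Λ : ℝ) (hΛ : 0 < Λ)
    (U V : Measure ℝ) [IsProbabilityMeasure U] [IsProbabilityMeasure V]
    (hUsupp : U (Set.Icc 0 Λ) = 1) (hVsupp : V (Set.Icc 0 Λ) = 1)
    (hmom : ∀ j : ℕ, 1 ≤ j → j ≤ L → ∫ u, u ^ j ∂U = ∫ v, v ^ j ∂V)
    (D : ℕ) (θ lam : Fin D → ℝ) (hθ : ∀ i, 0 ≤ θ i) (hlam : ∀ i, 0 ≤ lam i)
    (hθ1 : ∑ i, θ i = 1)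
    (hcond : 1 - 1 / (2 * Λ) ≤
      ∑ i ∈ Finset.univ.filter (fun i => 2 * Λ ^ 2 * θ i ≤ lam i), θ i) :
    ((1 / 2) * ∑' m : Fin D → ℕ, |poiMix U θ lam m - poiMix V θ lam m|) ^ 2
      ≤ 1 / (Nat.factorial L : ℝ) := by
  set κ := ∑ i, θ i ^ 2 / (Λ * θ i + lam i) with hκdef
  have hb : ∀ i, 0 ≤ Λ * θ i + lam i := fun i =>
    add_nonneg (mul_nonneg hΛ.le (hθ i)) (hlam i)
  have hκ0 : 0 ≤ κ := Finset.sum_nonneg fun i _ => div_nonneg (sq_nonneg _) (hb i)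
  have hκ1 : κ * Λ ^ 2 ≤ 1 := kappa_bd Λ hΛ D θ lam hθ hlam hθ1 hcond
  set GU := fun m => ∫ u, GG Λ θ lam m u ∂U with hGU
  set GV := fun m => ∫ u, GG Λ θ lam m u ∂V with hGV
  set MU := fun j : ℕ => ∫ u, (u - Λ) ^ j ∂U with hMU
  set MV := fun j : ℕ => ∫ u, (u - Λ) ^ j ∂V with hMV
  obtain ⟨X, hX1, hX2⟩ : ∃ X, HasSum (fun m => QQ Λ θ lam m * (GU m - GV m) ^ 2) X ∧
      HasSum (fun j : ℕ => κ ^ j / (Nat.factorial j : ℝ) * (MU j - MV j) ^ 2) X := by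
    have A := ((sum1 Λ θ lam hΛ hθ hlam U U hUsupp hUsupp).sub
        ((sum1 Λ θ lam hΛ hθ hlam U V hUsupp hVsupp).mul_left 2)).add
        (sum1 Λ θ lam hΛ hθ hlam V V hVsupp hVsupp)
    have B := ((sum2 Λ κ hκ0 U U hUsupp hUsupp).sub
        ((sum2 Λ κ hκ0 U V hUsupp hVsupp).mul_left 2)).add (sum2 Λ κ hκ0 V V hVsupp hVsupp)
    refine ⟨_, hs_congr A (fun m => ?_) rfl, hs_congr B (fun j => ?_) rfl⟩
    · simp only [hGU, hGV]; ring
    · simp only [hMU, hMV]; ring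
  have hXle : X ≤ 4 / (Nat.factorial L : ℝ) := by
    have h1 := (hasSum_nat_add_iff' (L + 1)).2 hX2
    rw [Finset.sum_eq_zero, sub_zero] at h1
    · have h2 := (hasSum_geometric_two' (4 / (Nat.factorial L : ℝ)))
      refine hasSum_le (fun k => ?_) h1 h2
      have hf : (Nat.factorial L : ℝ) * 2 ^ (k + 1) ≤ (Nat.factorial (k + (L + 1)) : ℝ) := by
        have := Nat.factorial_mul_pow_le_factorial (m := L) (n := k + 1)
        have h3 : 2 ^ (k + 1) ≤ (L + 1) ^ (k + 1) := Nat.pow_le_pow_left (by omega) _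
        have h4 := (Nat.mul_le_mul_left (Nat.factorial L) h3).trans this
        rw [show L + (k + 1) = k + (L + 1) by ring] at h4
        exact_mod_cast h4
      generalize k + (L + 1) = j at hf ⊢
      have hd : (MU j - MV j) ^ 2 ≤ 4 * (Λ ^ 2) ^ j := by
        have a := abs_le.1 (mom_bd Λ U hUsupp j)
        have b := abs_le.1 (mom_bd Λ V hVsupp j)
        have : |MU j - MV j| ≤ 2 * Λ ^ j := by
          simp only [hMU, hMV]
          rw [abs_le]; constructor <;> linarith [a.1, a.2, b.1, b.2]
        calc (MU j - MV j) ^ 2 = |MU j - MV j| ^ 2 := (sq_abs _).symm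
          _ ≤ (2 * Λ ^ j) ^ 2 := by gcongr
          _ = _ := by rw [mul_pow, ← pow_mul, ← pow_mul, mul_comm j 2]; norm_num
      have hfp : (0 : ℝ) < Nat.factorial L := by exact_mod_cast Nat.factorial_pos L
      have hjp : (0 : ℝ) < Nat.factorial j := by exact_mod_cast Nat.factorial_pos j
      calc κ ^ j / (Nat.factorial j : ℝ) * (MU j - MV j) ^ 2
          ≤ κ ^ j / (Nat.factorial j : ℝ) * (4 * (Λ ^ 2) ^ j) := by gcongr
        _ = 4 * (κ * Λ ^ 2) ^ j / (Nat.factorial j : ℝ) := by rw [mul_pow]; ring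
        _ ≤ 4 * 1 / (Nat.factorial j : ℝ) := by
            gcongr
            exact pow_le_one₀ (by positivity) hκ1
        _ ≤ 4 * 1 / ((Nat.factorial L : ℝ) * 2 ^ (k + 1)) := by gcongr
        _ = _ := by rw [pow_succ]; field_simp
    · intro j hj
      have : MU j = MV j := mom_eq Λ L U V hUsupp hVsupp hmom j
        (by have := Finset.mem_range.1 hj; omega)
      rw [this]; simp
  have hQ0 : ∀ m, 0 ≤ QQ Λ θ lam m := fun m =>
    Finset.prod_nonneg fun i _ => poiP_nonneg (hb i) _
  have hQ := QQ_sum Λ θ lam hΛ hθ hlam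
  have hmix : ∀ (W : Measure ℝ) m, poiMix W θ lam m
      = QQ Λ θ lam m * ∫ u, GG Λ θ lam m u ∂W := by
    intro W m
    unfold poiMix
    simp only [prod_eq Λ θ lam hΛ hθ hlam]
    rw [integral_const_mul]
  have hX0 : 0 ≤ X := hX1.nonneg fun m => mul_nonneg (hQ0 m) (sq_nonneg _)
  have hts : ∑' m : Fin D → ℕ, |poiMix U θ lam m - poiMix V θ lam m| ≤ Real.sqrt X := by
    refine Real.tsum_le_of_sum_le (fun m => abs_nonneg _) fun s => ?_
    apply Real.le_sqrt_of_sq_le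
    calc (∑ m ∈ s, |poiMix U θ lam m - poiMix V θ lam m|) ^ 2
        ≤ (∑ m ∈ s, QQ Λ θ lam m) * ∑ m ∈ s, QQ Λ θ lam m * (GU m - GV m) ^ 2 := by
          refine Finset.sum_sq_le_sum_mul_sum_of_sq_le_mul _ (fun m _ => hQ0 m)
            (fun m _ => mul_nonneg (hQ0 m) (sq_nonneg _)) (fun m _ => ?_)
          rw [sq_abs, hmix, hmix]
          simp only [hGU, hGV]
          exact le_of_eq (by ring)
      _ ≤ 1 * X := by
          gcongr
          · exact Finset.sum_nonneg fun m _ => mul_nonneg (hQ0 m) (sq_nonneg _)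
          · exact sum_le_hasSum _ (fun m _ => hQ0 m) hQ
          · exact sum_le_hasSum _ (fun m _ => mul_nonneg (hQ0 m) (sq_nonneg _)) hX1
      _ = X := one_mul X
  have h0 : 0 ≤ ∑' m : Fin D → ℕ, |poiMix U θ lam m - poiMix V θ lam m| :=
    tsum_nonneg fun m => abs_nonneg _
  calc _ ≤ ((1 / 2) * Real.sqrt X) ^ 2 := by gcongr
    _ = X / 4 := by rw [mul_pow, Real.sq_sqrt hX0]; ring
    _ ≤ (4 / (Nat.factorial L : ℝ)) / 4 := by gcongr
    _ = _ := by ring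
end

section
/- There is a constant C > 0 such that for every integer n ≥ 1 there exist a randomizer R mapping each x ∈ [n] to a probability distribution R(x) on the subsets of [n], and an analyzer A : (subsets of [n])^n → ℝ, with the following two properties. (Privacy) For all x, y ∈ [n] and every collection E of subsets of [n], R(x)(E) ≤ C·n·R(y)(E). (Accuracy) For every dataset (x₁,…,xₙ) ∈ [n]^n, if S₁,…,Sₙ are independent with S_i ← R(x_i), then with probability at least 0.99, |A(S₁,…,Sₙ) − |{x₁,…,xₙ}|| ≤ C·√n. (This says there is a (ln n + O(1))-locally differentially private protocol computing the number of distinct elements among n users with error O(√n).) -/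
open Finset in
lemma sum_finset_prod_ite {n : ℕ} (a b : Fin n → ℝ) :
    ∑ s : Finset (Fin n), ∏ j, (if j ∈ s then a j else b j) = ∏ j, (a j + b j) := by
  rw [Finset.prod_add, Finset.powerset_univ]
  refine Finset.sum_congr rfl fun s _ => ?_
  rw [Finset.prod_ite]
  congr 1
  · refine Finset.prod_congr ?_ fun _ _ => rfl
    ext; simp
  · refine Finset.prod_congr ?_ fun _ _ => rfl
    ext; simp

/-- probability that coordinate `j` is included on input `x` -/
noncomputable def inclProb {n : ℕ} (q : ℝ) (x j : Fin n) : ℝ := if j = x then 1 / 2 else q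

/-- asymmetric unary encoding -/
noncomputable def rand {n : ℕ} (q : ℝ) (x : Fin n) (s : Finset (Fin n)) : ℝ :=
  ∏ j, (if j ∈ s then inclProb q x j else 1 - inclProb q x j)

/-- the character of `j` -/
noncomputable def chr {n : ℕ} (j : Fin n) (s : Finset (Fin n)) : ℝ := if j ∈ s then -1 else 1

lemma chr_expect {n : ℕ} (q : ℝ) (x : Fin n) (T : Finset (Fin n)) :
    ∑ s, rand q x s * ∏ l ∈ T, chr l s = ∏ l ∈ T, (1 - 2 * inclProb q x l) := by
  have h : ∀ s : Finset (Fin n), rand q x s * ∏ l ∈ T, chr l s =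
      ∏ j, (if j ∈ s then inclProb q x j * (if j ∈ T then -1 else 1)
        else 1 - inclProb q x j) := by
    intro s
    have : ∏ l ∈ T, chr l s = ∏ l, (if l ∈ T then chr l s else 1) := by
      rw [Finset.prod_ite_mem, Finset.univ_inter]
    rw [this, rand, ← Finset.prod_mul_distrib]
    refine Finset.prod_congr rfl fun j _ => ?_
    unfold chr
    split_ifs <;> ring
  simp_rw [h]
  rw [sum_finset_prod_ite]
  have : ∏ l ∈ T, (1 - 2 * inclProb q x l) =
      ∏ l, (if l ∈ T then (1 - 2 * inclProb q x l) else 1) := by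
    rw [Finset.prod_ite_mem, Finset.univ_inter]
  rw [this]
  refine Finset.prod_congr rfl fun j _ => ?_
  split_ifs <;> ring

/-- product of characters over users -/
noncomputable def obs {n : ℕ} (j : Fin n) (S : Fin n → Finset (Fin n)) : ℝ := ∏ i, chr j (S i)

lemma obs_expect {n : ℕ} (q : ℝ) (x : Fin n → Fin n) (T : Finset (Fin n)) :
    ∑ S : Fin n → Finset (Fin n), (∏ i, rand q (x i) (S i)) * ∏ l ∈ T, obs l S =
      ∏ l ∈ T, ∏ i, (1 - 2 * inclProb q (x i) l) := by
  rw [Finset.prod_comm]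
  simp_rw [← chr_expect]
  rw [Finset.prod_univ_sum, Fintype.piFinset_univ]
  refine Finset.sum_congr rfl fun S _ => ?_
  unfold obs
  rw [Finset.prod_comm, ← Finset.prod_mul_distrib]

lemma obs_sq {n : ℕ} (j : Fin n) (S : Fin n → Finset (Fin n)) : obs j S * obs j S = 1 := by
  unfold obs
  rw [← Finset.prod_mul_distrib]
  refine Finset.prod_eq_one fun i _ => ?_
  unfold chr
  split_ifs <;> norm_num

lemma mean_eq {n : ℕ} (q : ℝ) (x : Fin n → Fin n) (l : Fin n) :
    ∏ i, (1 - 2 * inclProb q (x i) l) =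
      if l ∈ Finset.univ.image x then 0 else (1 - 2 * q) ^ n := by
  split_ifs with h
  · obtain ⟨i, _, hi⟩ := Finset.mem_image.1 h
    refine Finset.prod_eq_zero (Finset.mem_univ i) ?_
    simp [inclProb, hi]
  · have : ∀ i ∈ Finset.univ, (1 - 2 * inclProb q (x i) l) = 1 - 2 * q := by
      intro i _
      have : l ≠ x i := fun e => h (e ▸ Finset.mem_image_of_mem x (Finset.mem_univ i))
      simp [inclProb, this]
    rw [Finset.prod_congr rfl this]
    simp

lemma second_moment {n : ℕ} (q : ℝ) (x : Fin n → Fin n) (hK : 1 / 2 ≤ (1 - 2 * q) ^ n) :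
    ∑ S : Fin n → Finset (Fin n), (∏ i, rand q (x i) (S i)) *
      (((n : ℝ) - (∑ j, obs j S) / (1 - 2 * q) ^ n) - ((Finset.univ.image x).card : ℝ)) ^ 2
      ≤ 4 * (n : ℝ) := by
  set K := (1 - 2 * q) ^ n with hKdef
  have hK0 : 0 < K := by linarith
  let d : Fin n → ℝ := fun j => if j ∈ Finset.univ.image x then 0 else 1
  let P : (Fin n → Finset (Fin n)) → ℝ := fun S => ∏ i, rand q (x i) (S i)
  have hd : (n : ℝ) - ((Finset.univ.image x).card : ℝ) = ∑ j, d j := by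
    have h1 : ∑ j : Fin n, (1 - d j) = ((Finset.univ.image x).card : ℝ) := by
      have : ∀ j, 1 - d j = if j ∈ Finset.univ.image x then 1 else 0 := by
        intro j; simp only [d]; split_ifs <;> norm_num
      simp_rw [this]
      rw [Finset.sum_ite_mem, Finset.univ_inter]
      simp
    rw [Finset.sum_sub_distrib] at h1
    simp only [Finset.sum_const, Finset.card_univ, Fintype.card_fin, nsmul_eq_mul, mul_one] at h1
    linarith
  have e0 : ∑ S, P S = 1 := by simpa using obs_expect q x ∅
  have e1 : ∀ j, ∑ S, P S * obs j S = K * d j := by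
    intro j
    have := obs_expect q x {j}
    simp only [Finset.prod_singleton] at this
    rw [mean_eq] at this
    rw [this]; simp only [d]; split_ifs <;> simp [hKdef]
  have e2 : ∀ j k, j ≠ k → ∑ S, P S * (obs j S * obs k S) = (K * d j) * (K * d k) := by
    intro j k hjk
    have := obs_expect q x {j, k}
    simp only [Finset.prod_pair hjk] at this
    rw [mean_eq, mean_eq] at this
    rw [this]; simp only [d]; split_ifs <;> simp [hKdef]
  have e3 : ∀ j, ∑ S, P S * (obs j S * obs j S) = 1 := by
    intro j; simp_rw [obs_sq, mul_one]; exact e0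
  have expand : ∀ S, P S * (((n : ℝ) - (∑ j, obs j S) / K) -
      ((Finset.univ.image x).card : ℝ)) ^ 2 =
      ∑ j, ∑ k, P S * ((d j - obs j S / K) * (d k - obs k S / K)) := by
    intro S
    have : ((n : ℝ) - (∑ j, obs j S) / K) - ((Finset.univ.image x).card : ℝ) =
        ∑ j, (d j - obs j S / K) := by
      rw [Finset.sum_sub_distrib, ← hd, Finset.sum_div]; ring
    rw [this, sq, Finset.sum_mul_sum, Finset.mul_sum]
    simp_rw [Finset.mul_sum]
  have cross : ∀ j k, ∑ S, P S * ((d j - obs j S / K) * (d k - obs k S / K)) =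
      d j * d k - d j * d k - d k * d j + (∑ S, P S * (obs j S * obs k S)) / K ^ 2 := by
    intro j k
    have : ∀ S, P S * ((d j - obs j S / K) * (d k - obs k S / K)) =
        (d j * d k) * P S - (d j / K) * (P S * obs k S) - (d k / K) * (P S * obs j S)
          + (1 / K ^ 2) * (P S * (obs j S * obs k S)) := by
      intro S; field_simp; ring
    simp_rw [this]
    rw [Finset.sum_add_distrib, Finset.sum_sub_distrib, Finset.sum_sub_distrib,
      ← Finset.mul_sum, ← Finset.mul_sum, ← Finset.mul_sum, ← Finset.mul_sum, e0, e1, e1]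
    field_simp
  have bound : ∀ j k, ∑ S, P S * ((d j - obs j S / K) * (d k - obs k S / K)) ≤
      if j = k then 4 else 0 := by
    intro j k
    rw [cross]
    split_ifs with h
    · subst h
      rw [e3]
      have : 1 / K ^ 2 ≤ 4 := by
        rw [div_le_iff₀ (by positivity)]; nlinarith
      nlinarith [mul_self_nonneg (d j)]
    · rw [e2 j k h]
      have : (K * d j) * (K * d k) / K ^ 2 = d j * d k := by field_simp
      rw [this]; linarith
  calc _ = ∑ S, ∑ j, ∑ k, P S * ((d j - obs j S / K) * (d k - obs k S / K)) :=
        Finset.sum_congr rfl fun S _ => expand S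
    _ = ∑ j, ∑ k, ∑ S, P S * ((d j - obs j S / K) * (d k - obs k S / K)) := by
        rw [Finset.sum_comm]
        refine Finset.sum_congr rfl fun j _ => ?_
        rw [Finset.sum_comm]
    _ ≤ ∑ j : Fin n, ∑ k : Fin n, if j = k then 4 else 0 :=
        Finset.sum_le_sum fun j _ => Finset.sum_le_sum fun k _ => bound j k
    _ = 4 * (n : ℝ) := by simp [mul_comm]

lemma rand_nonneg {n : ℕ} {q : ℝ} (hq : 0 ≤ q) (hq1 : q ≤ 1) (x : Fin n) (s : Finset (Fin n)) :
    0 ≤ rand q x s := by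
  refine Finset.prod_nonneg fun j _ => ?_
  unfold inclProb
  split_ifs <;> linarith

lemma rand_ratio {n : ℕ} {q c : ℝ} (hq : 0 < q) (hq1 : q ≤ 1 / 2) (hc : 1 ≤ c * q)
    (x y : Fin n) (s : Finset (Fin n)) : rand q x s ≤ c * rand q y s := by
  have hc0 : 0 < c := by
    by_contra h
    nlinarith
  have hc1 : 1 ≤ c := by nlinarith
  by_cases hxy : x = y
  · subst hxy
    nlinarith [rand_nonneg hq.le (by linarith) x s]
  unfold rand
  have hx : x ∈ (Finset.univ : Finset (Fin n)) := Finset.mem_univ x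
  have hy : y ∈ (Finset.univ : Finset (Fin n)).erase x := by simp [Ne.symm hxy]
  rw [← Finset.mul_prod_erase _ _ hx, ← Finset.mul_prod_erase _ _ hy,
    ← Finset.mul_prod_erase _ (fun j => if j ∈ s then inclProb q y j else 1 - inclProb q y j) hx,
    ← Finset.mul_prod_erase _ (fun j => if j ∈ s then inclProb q y j else 1 - inclProb q y j) hy]
  have hprod : ∏ j ∈ ((Finset.univ : Finset (Fin n)).erase x).erase y,
      (if j ∈ s then inclProb q x j else 1 - inclProb q x j) =
      ∏ j ∈ ((Finset.univ : Finset (Fin n)).erase x).erase y,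
      (if j ∈ s then inclProb q y j else 1 - inclProb q y j) := by
    refine Finset.prod_congr rfl fun j hj => ?_
    have h1 : j ≠ y := Finset.ne_of_mem_erase hj
    have h2 : j ≠ x := Finset.ne_of_mem_erase (Finset.mem_of_mem_erase hj)
    simp [inclProb, h1, h2]
  rw [hprod]
  have hnn : 0 ≤ ∏ j ∈ ((Finset.univ : Finset (Fin n)).erase x).erase y,
      (if j ∈ s then inclProb q y j else 1 - inclProb q y j) := by
    refine Finset.prod_nonneg fun j _ => ?_
    unfold inclProb
    split_ifs <;> linarith
  rw [← mul_assoc, ← mul_assoc, ← mul_assoc]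
  refine mul_le_mul_of_nonneg_right ?_ hnn
  have hyx : y ≠ x := Ne.symm hxy
  simp only [inclProb, hxy, hyx, if_true, if_false]
  split_ifs <;> nlinarith

/-- a `(ln n + O(1))`-locally DP protocol computing the number of
distinct elements among `n` users with error `O(√n)`. -/
theorem stmt_5 :
    ∃ C : ℝ, 0 < C ∧
      ∀ n : ℕ, 1 ≤ n →
        ∃ (R : Fin n → Finset (Fin n) → ℝ) (A : (Fin n → Finset (Fin n)) → ℝ),
          (∀ x, (∀ s, 0 ≤ R x s) ∧ ∑ s, R x s = 1) ∧
          (∀ x y : Fin n, ∀ E : Finset (Finset (Fin n)),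
            ∑ s ∈ E, R x s ≤ C * (n : ℝ) * ∑ s ∈ E, R y s) ∧
          (∀ x : Fin n → Fin n,
            (0.99 : ℝ) ≤ ∑ S : Fin n → Finset (Fin n),
              (if |A S - ((Finset.univ.image x).card : ℝ)| ≤ C * Real.sqrt n then
                ∏ i, R (x i) (S i) else 0)) := by
  refine ⟨20, by norm_num, fun n hn => ?_⟩
  have hn' : (1 : ℝ) ≤ n := by exact_mod_cast hn
  obtain ⟨q, hq⟩ : ∃ q : ℝ, q = 1 / (4 * n) := ⟨_, rfl⟩
  have hqn : n * q = 1 / 4 := by rw [hq]; field_simp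
  have hq0 : 0 < q := by rw [hq]; positivity
  have hq1 : q ≤ 1 / 4 := by nlinarith
  have hK : 1 / 2 ≤ (1 - 2 * q) ^ n := by
    have := one_add_mul_le_pow (show (-2 : ℝ) ≤ -(2 * q) by linarith) n
    have h2 : 1 + -(2 * q) = 1 - 2 * q := by ring
    rw [h2] at this
    nlinarith
  refine ⟨rand q, fun S => (n : ℝ) - (∑ j, obs j S) / (1 - 2 * q) ^ n, ?_, ?_, ?_⟩
  · intro x
    refine ⟨rand_nonneg hq0.le (by linarith) x, ?_⟩
    simpa using chr_expect q x ∅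
  · intro x y E
    rw [Finset.mul_sum]
    exact Finset.sum_le_sum fun s _ => rand_ratio hq0 (by linarith) (by nlinarith) x y s
  · intro x
    have h2 := second_moment q x hK
    have e0 : ∑ S : Fin n → Finset (Fin n), ∏ i, rand q (x i) (S i) = 1 := by
      simpa using obs_expect q x ∅
    have key : ∀ S : Fin n → Finset (Fin n),
        (∏ i, rand q (x i) (S i)) - (1 / (400 * n)) * ((∏ i, rand q (x i) (S i)) *
        (((n : ℝ) - (∑ j, obs j S) / (1 - 2 * q) ^ n) - ((Finset.univ.image x).card : ℝ)) ^ 2) ≤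
        (if |((n : ℝ) - (∑ j, obs j S) / (1 - 2 * q) ^ n) - ((Finset.univ.image x).card : ℝ)|
          ≤ 20 * Real.sqrt n then ∏ i, rand q (x i) (S i) else 0) := by
      intro S
      have hP : 0 ≤ ∏ i, rand q (x i) (S i) :=
        Finset.prod_nonneg fun i _ => rand_nonneg hq0.le (by linarith) _ _
      generalize (∏ i, rand q (x i) (S i)) = P at *
      generalize ((n : ℝ) - (∑ j, obs j S) / (1 - 2 * q) ^ n) -
        ((Finset.univ.image x).card : ℝ) = D at *
      split_ifs with h
      · have : 0 ≤ (1 / (400 * (n : ℝ))) * (P * D ^ 2) := by positivity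
        linarith
      · push Not at h
        have h3 : 400 * (n : ℝ) ≤ D ^ 2 := by
          rw [← sq_abs D]
          have hs := Real.sq_sqrt (show (0 : ℝ) ≤ n by linarith)
          have hs0 := Real.sqrt_nonneg (n : ℝ)
          nlinarith
        have h4 : 1 ≤ (1 / (400 * (n : ℝ))) * D ^ 2 := by
          rw [one_div_mul_eq_div, le_div_iff₀ (by positivity)]; linarith
        nlinarith
    have hsum := Finset.sum_le_sum fun S (_ : S ∈ Finset.univ) => key S
    rw [Finset.sum_sub_distrib, ← Finset.mul_sum, e0] at hsum
    refine le_trans ?_ hsum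
    have h5 := mul_le_mul_of_nonneg_left h2 (show 0 ≤ 1 / (400 * (n : ℝ)) by positivity)
    have h6 : 1 / (400 * (n : ℝ)) * (4 * n) = 1 / 100 := by field_simp; norm_num
    rw [h6] at h5
    norm_num at h5 ⊢
    linarith
end

section
/- Let n ≥ 1 and t be integers with 1 ≤ t ≤ n, set B := n/t, and let E be a nonempty subset of [n] = {1,…,n}. For a uniformly random permutation π of [n], let E_π := E ∩ π^{−1}({1,…,t}). Then Pr_π[ | |E_π|·B − |E| | ≥ 10·√(B·|E|) ] ≤ 0.01. -/
open Finset in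
theorem perm_cross_symm {n : ℕ} (f : Fin n → ℝ) (i j : Fin n) (σ : Equiv.Perm (Fin n)) :
    ∑ π : Equiv.Perm (Fin n), f (π (σ i)) * f (π (σ j)) =
      ∑ π : Equiv.Perm (Fin n), f (π i) * f (π j) := by
  have := Equiv.sum_comp (Equiv.mulRight σ)
    (fun π : Equiv.Perm (Fin n) => f (π i) * f (π j))
  simpa using this

open Finset in
theorem perm_cross_nonpos {n : ℕ} (f : Fin n → ℝ) (hf : ∑ k, f k = 0) (i j : Fin n)
    (hij : i ≠ j) : ∑ π : Equiv.Perm (Fin n), f (π i) * f (π j) ≤ 0 := by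
  have h0 : ∑ k, ∑ π : Equiv.Perm (Fin n), f (π i) * f (π k) = 0 := by
    rw [sum_comm]
    apply sum_eq_zero
    intro π _
    rw [← mul_sum, Equiv.sum_comp π f, hf, mul_zero]
  rw [← add_sum_erase _ _ (mem_univ i)] at h0
  have h1 : ∀ k ∈ univ.erase i, ∑ π : Equiv.Perm (Fin n), f (π i) * f (π k) =
      ∑ π : Equiv.Perm (Fin n), f (π i) * f (π j) := by
    intro k hk
    have hki : k ≠ i := ne_of_mem_erase hk
    have := perm_cross_symm f i j (Equiv.swap j k)
    rw [Equiv.swap_apply_left, Equiv.swap_apply_of_ne_of_ne hij hki.symm] at this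
    exact this
  rw [sum_congr rfl h1, sum_const, nsmul_eq_mul] at h0
  have h2 : 0 ≤ ∑ π : Equiv.Perm (Fin n), f (π i) * f (π i) :=
    sum_nonneg fun π _ => mul_self_nonneg _
  have h3 : (0 : ℝ) < ((univ.erase i).card : ℝ) := by
    exact_mod_cast card_pos.mpr ⟨j, mem_erase.mpr ⟨hij.symm, mem_univ j⟩⟩
  by_contra hc
  push Not at hc
  have := mul_pos h3 hc
  linarith

open Finset in
theorem perm_diag {n : ℕ} (f : Fin n → ℝ) (i : Fin n) :
    (n : ℝ) * ∑ π : Equiv.Perm (Fin n), f (π i) * f (π i) =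
      (Fintype.card (Equiv.Perm (Fin n)) : ℝ) * ∑ k, f k * f k := by
  have h0 : ∑ k, ∑ π : Equiv.Perm (Fin n), f (π k) * f (π k) =
      (Fintype.card (Equiv.Perm (Fin n)) : ℝ) * ∑ k, f k * f k := by
    rw [sum_comm, sum_congr rfl (fun π _ => Equiv.sum_comp π (fun k => f k * f k)),
      sum_const, nsmul_eq_mul, card_univ]
  rw [← h0]
  have h1 : ∀ k ∈ (univ : Finset (Fin n)), ∑ π : Equiv.Perm (Fin n), f (π k) * f (π k) =
      ∑ π : Equiv.Perm (Fin n), f (π i) * f (π i) := by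
    intro k _
    have := perm_cross_symm f i i (Equiv.swap i k)
    rw [Equiv.swap_apply_left] at this
    exact this
  rw [sum_congr rfl h1, sum_const, nsmul_eq_mul, card_univ, Fintype.card_fin]

open Finset in
theorem perm_second_moment {n : ℕ} (f : Fin n → ℝ) (hf : ∑ k, f k = 0) (B : ℝ) (hn : 1 ≤ n)
    (hB : ∑ k, f k * f k ≤ n * B) (E : Finset (Fin n)) :
    ∑ π : Equiv.Perm (Fin n), (∑ i ∈ E, f (π i)) ^ 2 ≤
      (Fintype.card (Equiv.Perm (Fin n)) : ℝ) * (B * E.card) := by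
  have hn' : (0 : ℝ) < n := by exact_mod_cast hn
  have h1 : ∑ π : Equiv.Perm (Fin n), (∑ i ∈ E, f (π i)) ^ 2 =
      ∑ i ∈ E, ∑ j ∈ E, ∑ π : Equiv.Perm (Fin n), f (π i) * f (π j) := by
    simp_rw [sq, sum_mul_sum]
    rw [sum_comm]
    refine sum_congr rfl fun i _ => ?_
    rw [sum_comm]
  rw [h1]
  have h2 : ∀ i ∈ E, ∑ j ∈ E, ∑ π : Equiv.Perm (Fin n), f (π i) * f (π j) ≤
      (Fintype.card (Equiv.Perm (Fin n)) : ℝ) * B := by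
    intro i hi
    rw [← add_sum_erase _ _ hi]
    have h3 : ∑ j ∈ E.erase i, ∑ π : Equiv.Perm (Fin n), f (π i) * f (π j) ≤ 0 :=
      sum_nonpos fun j hj => perm_cross_nonpos f hf i j (ne_of_mem_erase hj).symm
    have h4 := perm_diag f i
    have h5 : (n : ℝ) * ∑ π : Equiv.Perm (Fin n), f (π i) * f (π i) ≤
        n * ((Fintype.card (Equiv.Perm (Fin n)) : ℝ) * B) := by
      rw [h4]
      calc _ ≤ (Fintype.card (Equiv.Perm (Fin n)) : ℝ) * (n * B) := by gcongr
        _ = _ := by ring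
    have h6 := le_of_mul_le_mul_left h5 hn'
    linarith
  calc _ ≤ ∑ i ∈ E, (Fintype.card (Equiv.Perm (Fin n)) : ℝ) * B := sum_le_sum h2
    _ = _ := by rw [sum_const, nsmul_eq_mul]; ring

/-- subsampling via a uniformly random permutation estimates the
size of a set: `Pr_π[ | |E ∩ π⁻¹({1,…,t})|·(n/t) − |E| | ≥ 10·√((n/t)·|E|) ] ≤ 0.01`. -/
theorem stmt_12 (n t : ℕ) (hn : 1 ≤ n) (ht1 : 1 ≤ t) (htn : t ≤ n)
    (E : Finset (Fin n)) (hE : E.Nonempty) :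
    ((Finset.univ.filter (fun π : Equiv.Perm (Fin n) =>
        10 * Real.sqrt (((n : ℝ) / (t : ℝ)) * (E.card : ℝ)) ≤
          |((E.filter (fun i => (π i : ℕ) < t)).card : ℝ) * ((n : ℝ) / (t : ℝ)) -
            (E.card : ℝ)|)).card : ℝ) /
      (Fintype.card (Equiv.Perm (Fin n)) : ℝ) ≤ 0.01 := by
  classical
  have hn' : (0 : ℝ) < n := by exact_mod_cast hn
  have ht' : (0 : ℝ) < t := by exact_mod_cast ht1
  have hBt : (n : ℝ) / t * t = n := div_mul_cancel₀ _ ht'.ne'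
  have hBpos : (0 : ℝ) < (n : ℝ) / t := by positivity
  generalize (n : ℝ) / t = B at hBt hBpos ⊢
  have hcard : ∑ k : Fin n, (if (k : ℕ) < t then (1 : ℝ) else 0) = t := by
    rw [Fin.sum_univ_eq_sum_range (fun k => if k < t then (1 : ℝ) else 0) n,
      ← Finset.sum_filter]
    have : (Finset.range n).filter (fun k => k < t) = Finset.range t := by
      ext k; simp; omega
    rw [this]; simp
  let f : Fin n → ℝ := fun k => B * (if (k : ℕ) < t then (1 : ℝ) else 0) - 1
  have hf : ∑ k, f k = 0 := by
    simp only [f]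
    rw [Finset.sum_sub_distrib, ← Finset.mul_sum, hcard, hBt]
    simp
  have hB : ∑ k, f k * f k ≤ n * B := by
    have : ∀ k, f k * f k = (B ^ 2 - 2 * B) * (if (k : ℕ) < t then (1 : ℝ) else 0) + 1 := by
      intro k
      simp only [f]
      split_ifs <;> ring
    rw [Finset.sum_congr rfl (fun k _ => this k), Finset.sum_add_distrib, ← Finset.mul_sum, hcard]
    simp
    have : (B ^ 2 - 2 * B) * t = n * B - 2 * n := by rw [← hBt]; ring
    linarith
  have hX : ∀ π : Equiv.Perm (Fin n),
      ((E.filter (fun i => (π i : ℕ) < t)).card : ℝ) * B - E.card = ∑ i ∈ E, f (π i) := by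
    intro π
    simp only [f]
    rw [Finset.sum_sub_distrib, ← Finset.mul_sum, Finset.sum_boole]
    simp [mul_comm]
  have hE' : (0 : ℝ) < E.card := by exact_mod_cast hE.card_pos
  have hM := perm_second_moment f hf B hn hB E
  have hN : (0 : ℝ) < (Fintype.card (Equiv.Perm (Fin n)) : ℝ) := by
    exact_mod_cast Fintype.card_pos
  simp_rw [hX]
  rw [div_le_iff₀ hN]
  set S := Finset.univ.filter (fun π : Equiv.Perm (Fin n) =>
    10 * Real.sqrt (B * (E.card : ℝ)) ≤ |∑ i ∈ E, f (π i)|) with hS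
  have h1 : (S.card : ℝ) * (100 * (B * E.card)) ≤
      ∑ π : Equiv.Perm (Fin n), (∑ i ∈ E, f (π i)) ^ 2 := by
    calc (S.card : ℝ) * (100 * (B * E.card)) = ∑ π ∈ S, 100 * (B * E.card) := by
          rw [Finset.sum_const, nsmul_eq_mul]
      _ ≤ ∑ π ∈ S, (∑ i ∈ E, f (π i)) ^ 2 := by
          refine Finset.sum_le_sum fun π hπ => ?_
          have h := (Finset.mem_filter.mp hπ).2
          have h2 := pow_le_pow_left₀ (by positivity) h 2
          rw [sq_abs, mul_pow, Real.sq_sqrt (by positivity)] at h2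
          linarith
      _ ≤ _ := Finset.sum_le_sum_of_subset_of_nonneg (Finset.subset_univ _)
          fun _ _ _ => sq_nonneg _
  have hP : 0 < B * (E.card : ℝ) := by positivity
  have h2 : (S.card * 100 : ℝ) * (B * E.card) ≤
      (Fintype.card (Equiv.Perm (Fin n)) : ℝ) * (B * E.card) := by linarith
  have h3 := le_of_mul_le_mul_right h2 hP
  norm_num
  linarith
end

section
/- Let n ≥ 1 and m be integers with 0 ≤ m ≤ n, and define f_n(m) := n·(1 − (1 − 1/n)^m). If Y₁,…,Y_m are i.i.d. uniformly random elements of [n] = {1,…,n}, then Pr[ | |{Y₁,…,Y_m}| − f_n(m) | ≥ 10·√n ] ≤ 0.01. -/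
/-- indicator that `Y` avoids `v` -/
noncomputable def missInd {n m : ℕ} (v : Fin n) (Y : Fin m → Fin n) : ℝ :=
  if v ∈ Finset.univ.image Y then 0 else 1

lemma missInd_sum {n m : ℕ} (Y : Fin m → Fin n) :
    ∑ v, missInd v Y = (n : ℝ) - ((Finset.univ.image Y).card : ℝ) := by
  have h : ∀ v, missInd v Y = 1 - (if v ∈ Finset.univ.image Y then (1:ℝ) else 0) := by
    intro v; unfold missInd; split_ifs <;> norm_num
  rw [Finset.sum_congr rfl (fun v _ => h v), Finset.sum_sub_distrib, Finset.sum_ite_mem]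
  simp

lemma missInd_pair {n m : ℕ} (v w : Fin n) :
    ∑ Y : Fin m → Fin n, missInd v Y * missInd w Y =
      (((n - ({v, w} : Finset (Fin n)).card) ^ m : ℕ) : ℝ) := by
  have h : (Fintype.piFinset (fun _ : Fin m => ({v, w} : Finset (Fin n))ᶜ)).card =
      (n - ({v, w} : Finset (Fin n)).card) ^ m := by
    rw [Fintype.card_piFinset_const, Finset.card_compl, Fintype.card_fin]
  rw [← h, Finset.card_eq_sum_ones, Nat.cast_sum, ← Finset.sum_filter_add_sum_filter_not
    Finset.univ (fun Y => Y ∈ Fintype.piFinset (fun _ : Fin m => ({v, w} : Finset (Fin n))ᶜ))]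
  rw [Finset.filter_mem_eq_inter, Finset.univ_inter]
  have h2 : ∑ Y ∈ Finset.univ.filter (fun Y => ¬ Y ∈ Fintype.piFinset
      (fun _ : Fin m => ({v, w} : Finset (Fin n))ᶜ)), missInd v Y * missInd w Y = 0 := by
    apply Finset.sum_eq_zero
    intro Y hY
    simp only [Finset.mem_filter, Fintype.mem_piFinset, not_forall, Finset.mem_compl, not_not,
      Finset.mem_insert, Finset.mem_singleton] at hY
    obtain ⟨_, i, hi | hi⟩ := hY
    · have : v ∈ Finset.univ.image Y := Finset.mem_image.2 ⟨i, Finset.mem_univ _, hi⟩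
      simp only [missInd, if_pos this, zero_mul]
    · have : w ∈ Finset.univ.image Y := Finset.mem_image.2 ⟨i, Finset.mem_univ _, hi⟩
      simp only [missInd, if_pos this, mul_zero]
  rw [h2, add_zero]
  apply Finset.sum_congr rfl
  intro Y hY
  simp only [Fintype.mem_piFinset, Finset.mem_compl, Finset.mem_insert,
    Finset.mem_singleton, not_or] at hY
  have h1 : v ∉ Finset.univ.image Y := by
    simp only [Finset.mem_image, not_exists, not_and]
    exact fun i _ => (hY i).1
  have h3 : w ∉ Finset.univ.image Y := by
    simp only [Finset.mem_image, not_exists, not_and]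
    exact fun i _ => (hY i).2
  simp only [missInd, if_neg h1, if_neg h3]; norm_num

lemma missInd_single {n m : ℕ} (v : Fin n) :
    ∑ Y : Fin m → Fin n, missInd v Y = (((n - 1) ^ m : ℕ) : ℝ) := by
  have h := missInd_pair (m := m) v v
  simp only [Finset.pair_eq_singleton, Finset.card_singleton] at h
  rw [← h]
  apply Finset.sum_congr rfl
  intro Y _
  unfold missInd; split_ifs <;> norm_num

lemma missInd_sum_one {n m : ℕ} :
    ∑ Y : Fin m → Fin n, ∑ v, missInd v Y = n * (((n - 1) ^ m : ℕ) : ℝ) := by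
  rw [Finset.sum_comm, Finset.sum_congr rfl (fun v _ => missInd_single v)]
  simp

lemma missInd_sum_sq {n m : ℕ} (hn : 1 ≤ n) :
    ∑ Y : Fin m → Fin n, (∑ v, missInd v Y) ^ 2 =
      n * (((n - 1) ^ m : ℕ) : ℝ) + n * ((n : ℝ) - 1) * (((n - 2) ^ m : ℕ) : ℝ) := by
  simp_rw [sq, Finset.sum_mul_sum]
  rw [Finset.sum_comm]
  have : ∀ v : Fin n, ∑ Y : Fin m → Fin n, ∑ w, missInd v Y * missInd w Y =
      (((n - 1) ^ m : ℕ) : ℝ) + ((n : ℝ) - 1) * (((n - 2) ^ m : ℕ) : ℝ) := by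
    intro v
    rw [Finset.sum_comm, Finset.sum_congr rfl (fun w _ => missInd_pair v w),
      ← Finset.add_sum_erase _ _ (Finset.mem_univ v)]
    congr 1
    · simp
    · rw [Finset.sum_congr rfl (g := fun _ => (((n - 2) ^ m : ℕ) : ℝ))]
      · simp [Finset.card_erase_of_mem, Nat.cast_sub hn]
      · intro w hw
        rw [Finset.card_pair (Finset.ne_of_mem_erase hw).symm]
  rw [Finset.sum_congr rfl (fun v _ => this v)]
  simp; ring

/-- concentration for the number of distinct values among `m`
i.i.d. uniform samples from `[n]` around `f_n(m) = n·(1 − (1 − 1/n)^m)`. -/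
theorem stmt_13 (n m : ℕ) (hn : 1 ≤ n) (hm : m ≤ n) :
    ((Finset.univ.filter (fun Y : Fin m → Fin n =>
        10 * Real.sqrt (n : ℝ) ≤
          |((Finset.univ.image Y).card : ℝ) -
            (n : ℝ) * (1 - (1 - 1 / (n : ℝ)) ^ m)|)).card : ℝ) /
      ((n : ℝ) ^ m) ≤ 0.01 := by
  have hn0 : (0 : ℝ) < n := by exact_mod_cast hn
  have hn1 : (1 : ℝ) ≤ n := by exact_mod_cast hn
  have hN : (0 : ℝ) < (n : ℝ) ^ m := by positivity
  set N : ℝ := (n : ℝ) ^ m with hNdef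
  set p : ℝ := (1 - 1 / (n : ℝ)) ^ m with hp
  have hq0 : (0 : ℝ) ≤ 1 - 1 / (n : ℝ) := by
    rw [sub_nonneg, div_le_one hn0]; exact hn1
  have hp0 : 0 ≤ p := pow_nonneg hq0 m
  have hp1 : p ≤ 1 := pow_le_one₀ hq0 (by simp)
  have hA : (((n - 1) ^ m : ℕ) : ℝ) = N * p := by
    rw [hNdef, hp, ← mul_pow, Nat.cast_pow, Nat.cast_sub hn]
    congr 1; field_simp; norm_num
  have hB : ((n : ℝ) - 1) * (((n - 2) ^ m : ℕ) : ℝ) ≤ ((n : ℝ) - 1) * (N * p ^ 2) := by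
    rcases Nat.lt_or_ge n 2 with h | h
    · have : n = 1 := by omega
      subst this; simp
    · apply mul_le_mul_of_nonneg_left _ (by linarith)
      rw [hNdef, hp, ← pow_mul, mul_comm m 2, pow_mul, ← mul_pow, Nat.cast_pow, Nat.cast_sub h]
      have h2 : (2 : ℝ) ≤ n := by exact_mod_cast h
      apply pow_le_pow_left₀ (by push_cast; linarith)
      have : (n : ℝ) * (1 - 1 / (n : ℝ)) ^ 2 = n - 2 + 1 / n := by field_simp; ring
      rw [this]; push_cast
      have : 0 ≤ 1 / (n : ℝ) := by positivity
      linarith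
  have hvar : ∑ Y : Fin m → Fin n, (∑ v, missInd v Y - n * p) ^ 2 ≤ n * N := by
    have e : ∀ Y : Fin m → Fin n, (∑ v, missInd v Y - n * p) ^ 2 =
      (∑ v, missInd v Y) ^ 2 - 2 * n * p * (∑ v, missInd v Y) + (n * p) ^ 2 := by
      intro Y; ring
    simp_rw [e]
    rw [Finset.sum_add_distrib, Finset.sum_sub_distrib, ← Finset.mul_sum, missInd_sum_sq hn,
      missInd_sum_one, hA]
    have hc : ∑ _Y : Fin m → Fin n, ((n : ℝ) * p) ^ 2 = N * (n * p) ^ 2 := by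
      simp [hNdef]
    rw [hc]
    have h1 := mul_le_mul_of_nonneg_left hB hn0.le
    have h2 : 0 ≤ n * N * p ^ 2 := by positivity
    have h3 : n * N * p ≤ n * N * 1 := mul_le_mul_of_nonneg_left hp1 (by positivity)
    nlinarith
  rw [div_le_iff₀ hN]
  set S := Finset.univ.filter (fun Y : Fin m → Fin n =>
        10 * Real.sqrt (n : ℝ) ≤
          |((Finset.univ.image Y).card : ℝ) - (n : ℝ) * (1 - p)|) with hS
  have hcheb : (S.card : ℝ) * (100 * n) ≤ n * N := by
    refine le_trans ?_ hvar
    rw [← nsmul_eq_mul]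
    refine le_trans (Finset.card_nsmul_le_sum S
      (fun Y => (∑ v, missInd v Y - n * p) ^ 2) _ ?_)
      (Finset.sum_le_sum_of_subset_of_nonneg (Finset.subset_univ _) fun _ _ _ => sq_nonneg _)
    intro Y hY
    have h := (Finset.mem_filter.1 hY).2
    have h2 := pow_le_pow_left₀ (by positivity) h 2
    rw [sq_abs, mul_pow, Real.sq_sqrt hn0.le] at h2
    simp only [missInd_sum]
    nlinarith
  have : (S.card : ℝ) * 100 ≤ N := by
    by_contra hcon
    push Not at hcon
    nlinarith
  linarith
end
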